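/- Let f_1,…,f_n be MRF (submodular dichotomous) valuations on a finite item set M, and define the welfare function W on sets of agents by W(S) = max over allocations A of Σ_{i∈S} f_i(A_i). Then W is submodular: for every set S of agents and every two distinct agents u, v ∉ S, W(S ∪ {u}) + W(S ∪ {v}) ≥ W(S) + W(S ∪ {u,v}). -/

import Mathlib

open Finset
open scoped Classical

variable {n : ℕ} {I : Type*} [DecidableEq I] [Fintype I]

/-- An allocation assigns pairwise disjoint bundles of items to the agents
(items may remain unallocated). -/
def IsAllocation (A : Fin n → Finset I) : Prop :=
  ∀ i j : Fin n, i ≠ j → Disjoint (A i) (A j)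

/-- The vector of utilities of an allocation under a profile of valuations. -/
def util {α : Type*} (f : Fin n → Finset I → α) (A : Fin n → Finset I) : Fin n → α :=
  fun i => f i (A i)

/-- The entries of the vector `u`, sorted in nondecreasing order. -/
noncomputable def sortedVec {α : Type*} [LinearOrder α] (u : Fin n → α) : List α :=
  (Finset.univ.val.map u).sort (· ≤ ·)

/-- `u` Lorenz-dominates `v`: for each `k`, the sum of the `k` smallest entries of `u`
is at least the sum of the `k` smallest entries of `v`. -/
def LorenzGE {α : Type*} [LinearOrder α] [AddCommMonoid α] (u v : Fin n → α) : Prop :=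
  ∀ k : ℕ, ((sortedVec v).take k).sum ≤ ((sortedVec u).take k).sum

/-- A matroid rank function: a normalized submodular valuation with dichotomous marginals. -/
structure IsMRF (f : Finset I → ℕ) : Prop where
  empty : f ∅ = 0
  submod : ∀ S T : Finset I, S ⊆ T → ∀ a : I,
      f (insert a T) + f S ≤ f (insert a S) + f T
  dichot : ∀ (S : Finset I) (a : I), f (insert a S) = f S ∨ f (insert a S) = f S + 1

/-- Non-redundancy: removing any item from any agent's bundle strictly decreases its value. -/
def NonRedundant (f : Fin n → Finset I → ℕ) (A : Fin n → Finset I) : Prop :=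
  ∀ i : Fin n, ∀ a ∈ A i, f i ((A i).erase a) < f i (A i)

/-- A Lorenz dominating allocation. -/
def LorenzDominating (f : Fin n → Finset I → ℕ) (A : Fin n → Finset I) : Prop :=
  ∀ B : Fin n → Finset I, IsAllocation B → LorenzGE (util f A) (util f B)

/-- The σ-perturbed utilities: agent `i` gets `f i (A i) + σ(i)/n²`, where the priority
`σ(i)` ranges over `{1,…,n}`. -/
noncomputable def pUtil (σ : Equiv.Perm (Fin n)) (f : Fin n → Finset I → ℕ)
    (A : Fin n → Finset I) : Fin n → ℝ :=
  fun i => (f i (A i) : ℝ) + (((σ i : ℕ) : ℝ) + 1) / (n : ℝ) ^ 2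

/-- A σ-Lorenz dominating allocation. -/
def SigmaLorenzDom (σ : Equiv.Perm (Fin n)) (f : Fin n → Finset I → ℕ)
    (A : Fin n → Finset I) : Prop :=
  ∀ B : Fin n → Finset I, IsAllocation B → LorenzGE (pUtil σ f A) (pUtil σ f B)

/-- Restriction of a valuation to a subset `D` of the items. -/
def restrictVal (f : Finset I → ℕ) (D : Finset I) : Finset I → ℕ := fun S => f (S ∩ D)

/-- A partition of all the items into `n` (possibly empty) bundles. -/
def IsPartition (P : Fin n → Finset I) : Prop :=
  (∀ i j : Fin n, i ≠ j → Disjoint (P i) (P j)) ∧ ∀ a : I, ∃ j, a ∈ P j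

/-- An XOS valuation: the pointwise maximum of a finite nonempty family of
nonnegative additive valuations. -/
def IsXOS (f : Finset I → ℝ) : Prop :=
  ∃ (k : ℕ) (w : Fin (k + 1) → I → ℝ),
    (∀ t a, 0 ≤ w t a) ∧
    ∀ S : Finset I, f S = Finset.univ.sup' Finset.univ_nonempty (fun t => ∑ a ∈ S, w t a)

/-- A dichotomous valuation (real-valued version). -/
def IsDichotomousR (f : Finset I → ℝ) : Prop :=
  ∀ (S : Finset I) (a : I), f (insert a S) = f S ∨ f (insert a S) = f S + 1

/-- Envy-freeness up to one good. -/
def EF1 (f : Fin n → Finset I → ℝ) (A : Fin n → Finset I) : Prop :=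
  ∀ i j : Fin n, f i (A j) ≤ f i (A i) ∨ ∃ e ∈ A j, f i ((A j).erase e) ≤ f i (A i)

/-- The maximum welfare attainable by a set `S` of agents. -/
noncomputable def maxWelfare (f : Fin n → Finset I → ℕ) (S : Finset (Fin n)) : ℕ :=
  Finset.sup (Finset.univ.filter fun B : Fin n → Finset I => IsAllocation B)
    (fun B => ∑ j ∈ S, f j (B j))

/-- An allocation extended with index `none` for the set of unallocated items. -/
def extAlloc (A : Fin n → Finset I) : Option (Fin n) → Finset I
  | none => Finset.univ \ Finset.univ.biUnion A
  | some i => A i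

/-!
For every set `T` of items, an agent `k` gains at most `f k T` from the items in `T`, and the items
outside `T` add at most `#Tᶜ` to the total welfare. The best of these bounds is attained
(a matroid-union min-max formula): `W(S) = min_T (∑ k ∈ S, f k T + #Tᶜ)`.
If `T₁` is optimal for `S₁` and `T₂` for `S₂`, then `T₁ ∪ T₂` bounds `W(S₁ ∩ S₂)` and `T₁ ∩ T₂`
bounds `W(S₁ ∪ S₂)`, so submodularity of the `f k` gives submodularity of `W`.

To attain the bound, give every agent access to all items, and then make the access sets as small as
possible subject to all the bounds for restricted access being at least `d`. If two agents still
shared an item `x`, then withdrawing `x` from either would break a bound, by at least `1` each time;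
uncrossing the two broken bounds costs only `1`, so it would break one of those that hold. So the
access sets form an allocation, and the bound for `T = univ` says that its welfare is at least `d`.
-/

namespace IsMRF

variable {α : Type*} [DecidableEq α] {f : Finset α → ℕ}

theorem mono (hf : IsMRF f) : Monotone f :=
  monotone_iff_forall_le_insert.mpr fun S a _ => by
    rcases hf.dichot S a with h | h <;> omega

theorem union_add_le_union_add (hf : IsMRF f) {S T : Finset α} (hST : S ⊆ T) (U : Finset α) :
    f (U ∪ T) + f S ≤ f (U ∪ S) + f T := by
  induction U using Finset.induction_on with
  | empty => simp [add_comm]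
  | insert a U _ ih =>
    have := hf.submod (U ∪ S) (U ∪ T) (union_subset_union_right hST) a
    rw [insert_union, insert_union]
    omega

theorem union_add_inter_le (hf : IsMRF f) (S T : Finset α) :
    f (S ∪ T) + f (S ∩ T) ≤ f S + f T := by
  simpa only [union_eq_left.mpr inter_subset_left] using
    hf.union_add_le_union_add (inter_subset_right : S ∩ T ⊆ T) S

theorem union_le_add_card (hf : IsMRF f) (S U : Finset α) : f (U ∪ S) ≤ f S + #U := by
  induction U using Finset.induction_on with
  | empty => simp
  | insert a U ha ih =>
    rw [insert_union, card_insert_of_notMem ha]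
    rcases hf.dichot (U ∪ S) a with h | h <;> omega

theorem le_add_card_sdiff (hf : IsMRF f) (S T : Finset α) : f S ≤ f T + #(S \ T) :=
  calc
    f S ≤ f (S \ T ∪ T) := hf.mono (by simp)
    _ ≤ f T + #(S \ T) := hf.union_le_add_card T (S \ T)

end IsMRF

theorem sum_inter_union_add_sum_union_inter_le {ι α : Type*} [DecidableEq ι] [DecidableEq α]
    {f : ι → Finset α → ℕ} (hf : ∀ k, IsMRF (f k)) (S₁ S₂ : Finset ι) (T₁ T₂ : Finset α) :
    ∑ k ∈ S₁ ∩ S₂, f k (T₁ ∪ T₂) + ∑ k ∈ S₁ ∪ S₂, f k (T₁ ∩ T₂) ≤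
      ∑ k ∈ S₁, f k T₁ + ∑ k ∈ S₂, f k T₂ := by
  have hboth : ∑ k ∈ S₁ ∩ S₂, f k (T₁ ∪ T₂) + ∑ k ∈ S₁ ∩ S₂, f k (T₁ ∩ T₂) ≤
      ∑ k ∈ S₁ ∩ S₂, f k T₁ + ∑ k ∈ S₁ ∩ S₂, f k T₂ := by
    simpa only [sum_add_distrib] using
      sum_le_sum fun k (_ : k ∈ S₁ ∩ S₂) => (hf k).union_add_inter_le T₁ T₂
  have hleft : ∑ k ∈ S₁ \ S₂, f k (T₁ ∩ T₂) ≤ ∑ k ∈ S₁ \ S₂, f k T₁ :=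
    sum_le_sum fun k _ => (hf k).mono inter_subset_left
  have hright : ∑ k ∈ S₂ \ S₁, f k (T₁ ∩ T₂) ≤ ∑ k ∈ S₂ \ S₁, f k T₂ :=
    sum_le_sum fun k _ => (hf k).mono inter_subset_right
  have hunion := sum_union_inter (s₁ := S₁) (s₂ := S₂) (f := fun k => f k (T₁ ∩ T₂))
  have hsplit₁ (T : Finset α) := sum_inter_add_sum_sdiff S₁ S₂ (f · T)
  have hsplit₂ (T : Finset α) := sum_inter_add_sum_sdiff S₂ S₁ (f · T)
  simp only [inter_comm S₂ S₁] at hsplit₂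
  linarith [hsplit₁ T₁, hsplit₂ T₂, hsplit₁ (T₁ ∩ T₂), hsplit₂ (T₁ ∩ T₂)]

section RestrictedAccess

variable {ι α : Type*} [DecidableEq α]

/-- The profile of valuations in which each agent `k` only values the items of the access set `A k`.
The access sets of different agents may overlap. -/
def restrictProfile (f : ι → Finset α → ℕ) (A : ι → Finset α) : ι → Finset α → ℕ :=
  fun k => restrictVal (f k) (A k)

variable [DecidableEq ι]

/-- The access sets that remain after agent `i` loses access to the item `x`. -/
def withdraw (A : ι → Finset α) (i : ι) (x : α) : ι → Finset α :=
  Function.update A i ((A i).erase x)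

theorem mem_withdraw {A : ι → Finset α} {i k : ι} {x a : α} :
    a ∈ withdraw A i x k ↔ a ∈ A k ∧ (k = i → a ≠ x) := by
  by_cases hk : k = i
  · subst hk
    simp [withdraw, and_comm]
  · simp [withdraw, hk]

theorem withdraw_lt {A : ι → Finset α} {i : ι} {x : α} (hx : x ∈ A i) : withdraw A i x < A :=
  update_lt_self_iff.mpr (erase_ssubset hx)

theorem restrictProfile_withdraw_of_notMem (f : ι → Finset α → ℕ) (A : ι → Finset α) (i k : ι)
    {x : α} {T : Finset α} (hx : x ∉ T) :
    restrictProfile f (withdraw A i x) k T = restrictProfile f A k T := by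
  have hT : T ∩ withdraw A i x k = T ∩ A k := by
    ext a
    grind [mem_withdraw]
  simp only [restrictProfile, restrictVal, hT]

theorem restrictProfile_uncross {f : ι → Finset α → ℕ} {k : ι} (hf : IsMRF (f k))
    (A : ι → Finset α) {i j : ι} (hij : i ≠ j) {x : α} {T₁ T₂ : Finset α}
    (h₁ : x ∈ T₁) (h₂ : x ∈ T₂) :
    restrictProfile f A k (T₁ ∪ T₂) + restrictProfile f A k ((T₁ ∩ T₂).erase x) ≤
      restrictProfile f (withdraw A i x) k T₁ + restrictProfile f (withdraw A j x) k T₂ := by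
  have hunion : (T₁ ∪ T₂) ∩ A k ⊆ (T₁ ∩ withdraw A i x k) ∪ (T₂ ∩ withdraw A j x k) := by
    intro a
    grind [mem_withdraw]
  have hinter : (T₁ ∩ T₂).erase x ∩ A k ⊆
      (T₁ ∩ withdraw A i x k) ∩ (T₂ ∩ withdraw A j x k) := by
    intro a
    grind [mem_withdraw]
  exact (add_le_add (hf.mono hunion) (hf.mono hinter)).trans (hf.union_add_inter_le _ _)

end RestrictedAccess

section CoverBound

variable {ι α : Type*} [DecidableEq α] [Fintype α]

theorem card_compl_union_add_card_compl_inter (S T : Finset α) :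
    #(S ∪ T)ᶜ + #(S ∩ T)ᶜ = #Sᶜ + #Tᶜ := by
  rw [compl_union, compl_inter, add_comm, card_union_add_card_inter]

/-- The upper bound on the welfare of the agents in `S` that values every item outside `T` at `1`:
the expression minimised over `T` in the min-max formula for the welfare. -/
def coverBound (f : ι → Finset α → ℕ) (S : Finset ι) (T : Finset α) : ℕ :=
  ∑ k ∈ S, f k T + #Tᶜ

theorem coverBound_inter_union_add_coverBound_union_inter_le [DecidableEq ι]
    {f : ι → Finset α → ℕ} (hf : ∀ k, IsMRF (f k)) (S₁ S₂ : Finset ι) (T₁ T₂ : Finset α) :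
    coverBound f (S₁ ∩ S₂) (T₁ ∪ T₂) + coverBound f (S₁ ∪ S₂) (T₁ ∩ T₂) ≤
      coverBound f S₁ T₁ + coverBound f S₂ T₂ := by
  have hvalue := sum_inter_union_add_sum_union_inter_le hf S₁ S₂ T₁ T₂
  have hcard := card_compl_union_add_card_compl_inter T₁ T₂
  simp only [coverBound]
  omega

theorem coverBound_uncross [DecidableEq ι] {f : ι → Finset α → ℕ} (hf : ∀ k, IsMRF (f k))
    (S : Finset ι) (A : ι → Finset α) {i j : ι} (hij : i ≠ j) {x : α} {T₁ T₂ : Finset α}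
    (h₁ : x ∈ T₁) (h₂ : x ∈ T₂) :
    coverBound (restrictProfile f A) S (T₁ ∪ T₂) +
        coverBound (restrictProfile f A) S ((T₁ ∩ T₂).erase x) ≤
      coverBound (restrictProfile f (withdraw A i x)) S T₁ +
        coverBound (restrictProfile f (withdraw A j x)) S T₂ + 1 := by
  have hvalue := sum_le_sum fun k (_ : k ∈ S) => restrictProfile_uncross (hf k) A hij h₁ h₂
  rw [sum_add_distrib, sum_add_distrib] at hvalue
  have hcard := card_compl_union_add_card_compl_inter T₁ T₂
  have hcard_erase : #((T₁ ∩ T₂).erase x)ᶜ = #(T₁ ∩ T₂)ᶜ + 1 := by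
    rw [compl_erase, card_insert_of_notMem (by simp [h₁, h₂])]
  simp only [coverBound]
  omega

theorem exists_mem_coverBound_withdraw_lt [DecidableEq ι] {f : ι → Finset α → ℕ} {S : Finset ι}
    {d : ℕ} {A : ι → Finset α}
    (hA : Minimal (fun A => ∀ T, d ≤ coverBound (restrictProfile f A) S T) A)
    {i : ι} {x : α} (hx : x ∈ A i) :
    ∃ T, x ∈ T ∧ coverBound (restrictProfile f (withdraw A i x)) S T < d := by
  obtain ⟨T, hT⟩ : ∃ T, coverBound (restrictProfile f (withdraw A i x)) S T < d := by
    simpa only [not_forall, not_le] using hA.not_prop_of_lt (withdraw_lt hx)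
  refine ⟨T, by_contra fun hxT => hT.not_ge ?_, hT⟩
  simpa only [coverBound, restrictProfile_withdraw_of_notMem f A i _ hxT] using hA.prop T

theorem disjoint_of_minimal_coverBound {f : ι → Finset α → ℕ} (hf : ∀ k, IsMRF (f k))
    {S : Finset ι} {d : ℕ} {A : ι → Finset α}
    (hA : Minimal (fun A => ∀ T, d ≤ coverBound (restrictProfile f A) S T) A)
    {i j : ι} (hij : i ≠ j) : Disjoint (A i) (A j) := by
  refine disjoint_left.mpr fun x hi hj => ?_
  obtain ⟨T₁, hx₁, hT₁⟩ := exists_mem_coverBound_withdraw_lt hA hi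
  obtain ⟨T₂, hx₂, hT₂⟩ := exists_mem_coverBound_withdraw_lt hA hj
  have huncross := coverBound_uncross hf S A hij hx₁ hx₂
  have hunion := hA.prop (T₁ ∪ T₂)
  have hinter := hA.prop ((T₁ ∩ T₂).erase x)
  omega

end CoverBound

section Welfare

variable {n : ℕ} {α : Type*} [Fintype α]

theorem IsAllocation.sum_le_maxWelfare (f : Fin n → Finset α → ℕ) {B : Fin n → Finset α}
    (hB : IsAllocation B) (S : Finset (Fin n)) : ∑ k ∈ S, f k (B k) ≤ maxWelfare f S :=
  le_sup (f := fun B : Fin n → Finset α => ∑ k ∈ S, f k (B k))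
    (mem_filter.mpr ⟨mem_univ B, hB⟩)

variable [DecidableEq α]

theorem IsAllocation.sum_card_sdiff_le {B : Fin n → Finset α} (hB : IsAllocation B)
    (S : Finset (Fin n)) (T : Finset α) : ∑ k ∈ S, #(B k \ T) ≤ #Tᶜ := by
  rw [← card_biUnion fun i _ j _ hij => (hB i j hij).mono sdiff_subset sdiff_subset,
    compl_eq_univ_sdiff]
  exact card_le_card (biUnion_subset.mpr fun k _ => sdiff_subset_sdiff (subset_univ _) le_rfl)

variable {f : Fin n → Finset α → ℕ} (hf : ∀ k, IsMRF (f k))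
include hf

theorem maxWelfare_le_coverBound (S : Finset (Fin n)) (T : Finset α) :
    maxWelfare f S ≤ coverBound f S T := by
  refine Finset.sup_le fun B hB => ?_
  calc
    ∑ k ∈ S, f k (B k) ≤ ∑ k ∈ S, (f k T + #(B k \ T)) :=
      sum_le_sum fun k _ => (hf k).le_add_card_sdiff (B k) T
    _ = ∑ k ∈ S, f k T + ∑ k ∈ S, #(B k \ T) := sum_add_distrib
    _ ≤ coverBound f S T := by
      unfold coverBound
      gcongr
      exact (mem_filter.mp hB).2.sum_card_sdiff_le S T

theorem le_maxWelfare_of_forall_le_coverBound {S : Finset (Fin n)} {d : ℕ}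
    (hd : ∀ T, d ≤ coverBound f S T) : d ≤ maxWelfare f S := by
  obtain ⟨A, hA⟩ := exists_minimal_of_wellFoundedLT
    (fun A => ∀ T, d ≤ coverBound (restrictProfile f A) S T)
    ⟨fun _ => univ, by simpa only [coverBound, restrictProfile, restrictVal, inter_univ] using hd⟩
  have hAlloc : IsAllocation A := fun i j hij => disjoint_of_minimal_coverBound hf hA hij
  calc
    d ≤ coverBound (restrictProfile f A) S univ := hA.prop univ
    _ = ∑ k ∈ S, f k (A k) := by simp [coverBound, restrictProfile, restrictVal]
    _ ≤ maxWelfare f S := hAlloc.sum_le_maxWelfare f S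

theorem exists_coverBound_eq_maxWelfare (S : Finset (Fin n)) :
    ∃ T, coverBound f S T = maxWelfare f S := by
  by_contra! hne
  have hlt (T : Finset α) : maxWelfare f S < coverBound f S T :=
    (maxWelfare_le_coverBound hf S T).lt_of_ne' (hne T)
  exact (le_maxWelfare_of_forall_le_coverBound hf hlt).not_gt (Nat.lt_succ_self _)

theorem maxWelfare_inter_add_maxWelfare_union_le (S₁ S₂ : Finset (Fin n)) :
    maxWelfare f (S₁ ∩ S₂) + maxWelfare f (S₁ ∪ S₂) ≤ maxWelfare f S₁ + maxWelfare f S₂ := by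
  obtain ⟨T₁, hT₁⟩ := exists_coverBound_eq_maxWelfare hf S₁
  obtain ⟨T₂, hT₂⟩ := exists_coverBound_eq_maxWelfare hf S₂
  calc
    maxWelfare f (S₁ ∩ S₂) + maxWelfare f (S₁ ∪ S₂) ≤
        coverBound f (S₁ ∩ S₂) (T₁ ∪ T₂) + coverBound f (S₁ ∪ S₂) (T₁ ∩ T₂) :=
      add_le_add (maxWelfare_le_coverBound hf _ _) (maxWelfare_le_coverBound hf _ _)
    _ ≤ coverBound f S₁ T₁ + coverBound f S₂ T₂ :=
      coverBound_inter_union_add_coverBound_union_inter_le hf S₁ S₂ T₁ T₂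
    _ = maxWelfare f S₁ + maxWelfare f S₂ := by rw [hT₁, hT₂]

end Welfare

/-- The welfare function induced by MRF valuations is submodular. -/
theorem maxWelfare_submodular
    {n : ℕ} {I : Type*} [DecidableEq I] [Fintype I]
    (f : Fin n → Finset I → ℕ) (hf : ∀ i, IsMRF (f i))
    (S : Finset (Fin n)) (u v : Fin n)
    (hu : u ∉ S) (hv : v ∉ S) (huv : u ≠ v) :
    maxWelfare f S + maxWelfare f (insert u (insert v S))
      ≤ maxWelfare f (insert u S) + maxWelfare f (insert v S) := by
  have hinter : insert u S ∩ insert v S = S := by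
    rw [insert_inter_of_notMem (by simp [huv, hu]), inter_insert_of_notMem hv, inter_self]
  have hunion : insert u S ∪ insert v S = insert u (insert v S) := by
    rw [insert_union, union_insert, union_self]
  simpa only [hinter, hunion] using
    maxWelfare_inter_add_maxWelfare_union_le hf (insert u S) (insert v S)
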